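/- Let W be a channel with finite input alphabet 𝒳, finite output alphabet 𝒴, and input distribution q. Define the Gallager function E₀(ρ) = -log₂ ∑_{y} (∑_{x} q(x) W(y|x)^{1/(1+ρ)})^{1+ρ}. Then for any r₀ ∈ (-1,0) and any bias b, the semi-invariant MGF of the metric γ = log₂(W(Y|X)/P(Y)) - b, where (X,Y) ~ q(x)W(y|x) and P(y) = ∑_x q(x)W(y|x), satisfies log₂ E[2^{r₀ γ}] ≤ -r₀ b - (1+r₀) E₀(-r₀/(1+r₀)). -/

import Mathlib

open Finset

/-!
Since `2 ^ (r γ) = 2 ^ (-r b) P ^ (-r) W ^ r`, averaging over the joint law gives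
`E[2 ^ (r γ)] = 2 ^ (-r b) ∑ y, P y ^ (-r) * ∑ x, q x * W x y ^ (1 + r)`. Hölder's inequality with
exponents `1 / (-r)` and `1 / (1 + r)` separates the first factor, whose norm is
`(∑ y, P y) ^ (-r) = 1`, from the second, whose norm is the sum inside
`E₀ (-r / (1 + r))` raised to the power `1 + r`.
-/

/-- Output distribution `P(y)` of the channel `W` (rows indexed by inputs) with input law `q`. -/
def outputDist {𝒳 𝒴 : Type*} [Fintype 𝒳] (W : 𝒳 → 𝒴 → ℝ) (q : 𝒳 → ℝ) (y : 𝒴) : ℝ :=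
  ∑ x, q x * W x y

/-- The inner sum of the Gallager function at output `y`, parametrized by the exponent
`s = 1 / (1 + ρ)`. -/
noncomputable def gallagerInner {𝒳 𝒴 : Type*} [Fintype 𝒳]
    (W : 𝒳 → 𝒴 → ℝ) (q : 𝒳 → ℝ) (s : ℝ) (y : 𝒴) : ℝ :=
  ∑ x, q x * W x y ^ s

/-- The Gallager function `E₀(ρ)` of the channel `W` with input law `q`, in bits. -/
noncomputable def gallagerE₀ {𝒳 𝒴 : Type*} [Fintype 𝒳] [Fintype 𝒴]
    (W : 𝒳 → 𝒴 → ℝ) (q : 𝒳 → ℝ) (ρ : ℝ) : ℝ :=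
  -Real.logb 2 (∑ y, gallagerInner W q (1 / (1 + ρ)) y ^ (1 + ρ))

/-- The Fano metric `γ(x, y) = log₂ (W(y|x) / P(y)) - b` with bias `b`. Where
`W x y = 0` or `P y = 0`, the conventions `log 0 = 0` and `a / 0 = 0` give it the value `-b`. -/
noncomputable def fanoMetric {𝒳 𝒴 : Type*} [Fintype 𝒳]
    (W : 𝒳 → 𝒴 → ℝ) (q : 𝒳 → ℝ) (b : ℝ) (x : 𝒳) (y : 𝒴) : ℝ :=
  Real.logb 2 (W x y / outputDist W q y) - b

/-- The base-two moment generating function `E[2 ^ (r γ(X, Y))]` of the Fano metric on the correct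
path, that is for `(X, Y)` with joint law `q(x) W(y|x)`. -/
noncomputable def fanoMGF {𝒳 𝒴 : Type*} [Fintype 𝒳] [Fintype 𝒴]
    (W : 𝒳 → 𝒴 → ℝ) (q : 𝒳 → ℝ) (b r : ℝ) : ℝ :=
  ∑ x, ∑ y, q x * W x y * 2 ^ (r * fanoMetric W q b x y)

theorem exists_pos_of_mem_stdSimplex {ι : Type*} [Fintype ι] {p : ι → ℝ}
    (hp : p ∈ stdSimplex ℝ ι) : ∃ i, 0 < p i := by
  have hsum : 0 < ∑ i, p i := hp.2 ▸ one_pos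
  simpa using (sum_pos_iff_of_nonneg fun i _ ↦ hp.1 i).mp hsum

theorem sum_rpow_mul_le_of_mem_stdSimplex {ι : Type*} [Fintype ι] {p a : ι → ℝ} {t : ℝ}
    (hp : p ∈ stdSimplex ℝ ι) (ha : ∀ i, 0 ≤ a i) (ht : t ∈ Set.Ioo (0 : ℝ) 1) :
    ∑ i, p i ^ t * a i ≤ (∑ i, a i ^ (1 / (1 - t))) ^ (1 - t) := by
  have hconj : (1 / t).HolderConjugate (1 / (1 - t)) :=
    Real.holderConjugate_one_div ht.1 (sub_pos.mpr ht.2) (add_sub_cancel t 1)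
  have hroot (i : ι) : (p i ^ t) ^ (1 / t) = p i := by
    rw [one_div, Real.rpow_rpow_inv (hp.1 i) ht.1.ne']
  simpa only [hroot, hp.2, Real.one_rpow, one_mul, one_div_one_div] using
    Real.inner_le_Lp_mul_Lq_of_nonneg univ hconj
      (fun i _ ↦ Real.rpow_nonneg (hp.1 i) t) (fun i _ ↦ ha i)

theorem rpow_mul_logb_div_sub {c w p : ℝ} (hc : 0 < c) (hc_ne : c ≠ 1) (hw : 0 < w) (hp : 0 < p)
    (b r : ℝ) :
    c ^ (r * (Real.logb c (w / p) - b)) = c ^ (-r * b) * (p ^ (-r) * w ^ r) := by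
  calc c ^ (r * (Real.logb c (w / p) - b))
      = c ^ (-r * b + Real.logb c (w / p) * r) := by ring_nf
    _ = c ^ (-r * b) * (w / p) ^ r := by
      rw [Real.rpow_add hc, Real.rpow_mul hc.le (Real.logb c (w / p)),
        Real.rpow_logb hc hc_ne (div_pos hw hp)]
    _ = c ^ (-r * b) * (p ^ (-r) * w ^ r) := by
      rw [Real.div_rpow hw.le hp.le, Real.rpow_neg hp.le, div_eq_inv_mul]

section Channel

variable {𝒳 𝒴 : Type*} [Fintype 𝒳] {W : 𝒳 → 𝒴 → ℝ} {q : 𝒳 → ℝ} {r : ℝ}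

theorem gallagerInner_nonneg (hW : ∀ x y, 0 ≤ W x y) (hq : ∀ x, 0 ≤ q x) (s : ℝ) (y : 𝒴) :
    0 ≤ gallagerInner W q s y :=
  sum_nonneg fun x _ ↦ mul_nonneg (hq x) (Real.rpow_nonneg (hW x y) s)

theorem outputDist_pos (hW : ∀ x y, 0 ≤ W x y) (hq : ∀ x, 0 ≤ q x) {x : 𝒳} {y : 𝒴}
    (hxy : 0 < q x * W x y) : 0 < outputDist W q y :=
  sum_pos' (fun x' _ ↦ mul_nonneg (hq x') (hW x' y)) ⟨x, mem_univ x, hxy⟩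

theorem mul_two_rpow_fanoMetric (hW : ∀ x y, 0 ≤ W x y) (hq : ∀ x, 0 ≤ q x) (hr : 1 + r ≠ 0)
    (b : ℝ) (x : 𝒳) (y : 𝒴) :
    q x * W x y * 2 ^ (r * fanoMetric W q b x y)
      = 2 ^ (-r * b) * (outputDist W q y ^ (-r) * (q x * W x y ^ (1 + r))) := by
  -- Off the support of the joint law both sides vanish, whatever the value of the metric there.
  rcases (hq x).eq_or_lt with hqx | hqx
  · simp only [← hqx, zero_mul, mul_zero]
  rcases (hW x y).eq_or_lt with hWxy | hWxy
  · simp only [← hWxy, Real.zero_rpow hr, zero_mul, mul_zero]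
  have hP : 0 < outputDist W q y := outputDist_pos hW hq (mul_pos hqx hWxy)
  rw [fanoMetric, rpow_mul_logb_div_sub two_pos (OfNat.ofNat_ne_one 2) hWxy hP,
    Real.rpow_add hWxy, Real.rpow_one]
  ring

variable [Fintype 𝒴]

theorem outputDist_mem_stdSimplex (hW : ∀ x, W x ∈ stdSimplex ℝ 𝒴) (hq : q ∈ stdSimplex ℝ 𝒳) :
    outputDist W q ∈ stdSimplex ℝ 𝒴 := by
  refine ⟨fun y ↦ sum_nonneg fun x _ ↦ mul_nonneg (hq.1 x) ((hW x).1 y), ?_⟩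
  calc ∑ y, outputDist W q y = ∑ x, ∑ y, q x * W x y := sum_comm
    _ = 1 := by simp only [← mul_sum, (hW _).2, mul_one, hq.2]

theorem gallagerE₀_neg_div_one_add (W : 𝒳 → 𝒴 → ℝ) (q : 𝒳 → ℝ) (hr : 1 + r ≠ 0) :
    gallagerE₀ W q (-r / (1 + r))
      = -Real.logb 2 (∑ y, gallagerInner W q (1 + r) y ^ (1 / (1 + r))) := by
  have hρ : 1 + -r / (1 + r) = 1 / (1 + r) := by field_simp; ring
  rw [gallagerE₀, hρ, one_div_one_div]

theorem fanoMGF_pos (hW : ∀ x, W x ∈ stdSimplex ℝ 𝒴) (hq : q ∈ stdSimplex ℝ 𝒳) (b r : ℝ) :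
    0 < fanoMGF W q b r := by
  obtain ⟨x, hx⟩ := exists_pos_of_mem_stdSimplex hq
  obtain ⟨y, hy⟩ := exists_pos_of_mem_stdSimplex (hW x)
  have hnonneg (x' : 𝒳) (y' : 𝒴) : 0 ≤ q x' * W x' y' * 2 ^ (r * fanoMetric W q b x' y') :=
    mul_nonneg (mul_nonneg (hq.1 x') ((hW x').1 y')) (Real.rpow_nonneg two_pos.le _)
  exact sum_pos' (fun x' _ ↦ sum_nonneg fun y' _ ↦ hnonneg x' y') ⟨x, mem_univ x,
    sum_pos' (fun y' _ ↦ hnonneg x y') ⟨y, mem_univ y,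
      mul_pos (mul_pos hx hy) (Real.rpow_pos_of_pos two_pos _)⟩⟩

theorem sum_gallagerInner_rpow_pos (hW : ∀ x, W x ∈ stdSimplex ℝ 𝒴) (hq : q ∈ stdSimplex ℝ 𝒳)
    (s t : ℝ) : 0 < ∑ y, gallagerInner W q s y ^ t := by
  have hW₀ : ∀ x y, 0 ≤ W x y := fun x ↦ (hW x).1
  obtain ⟨x, hx⟩ := exists_pos_of_mem_stdSimplex hq
  obtain ⟨y, hy⟩ := exists_pos_of_mem_stdSimplex (hW x)
  have hinner : 0 < gallagerInner W q s y :=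
    sum_pos' (fun x' _ ↦ mul_nonneg (hq.1 x') (Real.rpow_nonneg (hW₀ x' y) s))
      ⟨x, mem_univ x, mul_pos hx (Real.rpow_pos_of_pos hy s)⟩
  exact sum_pos' (fun y' _ ↦ Real.rpow_nonneg (gallagerInner_nonneg hW₀ hq.1 s y') t)
    ⟨y, mem_univ y, Real.rpow_pos_of_pos hinner t⟩

theorem fanoMGF_eq_mul_sum (hW : ∀ x y, 0 ≤ W x y) (hq : ∀ x, 0 ≤ q x) (hr : 1 + r ≠ 0) (b : ℝ) :
    fanoMGF W q b r
      = 2 ^ (-r * b) * ∑ y, outputDist W q y ^ (-r) * gallagerInner W q (1 + r) y := by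
  simp only [fanoMGF, mul_two_rpow_fanoMetric hW hq hr, gallagerInner, mul_sum]
  exact sum_comm

theorem fanoMGF_le_mul_rpow (hW : ∀ x, W x ∈ stdSimplex ℝ 𝒴) (hq : q ∈ stdSimplex ℝ 𝒳)
    (hr : r ∈ Set.Ioo (-1 : ℝ) 0) (b : ℝ) :
    fanoMGF W q b r
      ≤ 2 ^ (-r * b) * (∑ y, gallagerInner W q (1 + r) y ^ (1 / (1 + r))) ^ (1 + r) := by
  have hW₀ : ∀ x y, 0 ≤ W x y := fun x ↦ (hW x).1
  have hholder := sum_rpow_mul_le_of_mem_stdSimplex (outputDist_mem_stdSimplex hW hq)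
    (gallagerInner_nonneg hW₀ hq.1 (1 + r)) (t := -r) ⟨neg_pos.mpr hr.2, neg_lt.mpr hr.1⟩
  rw [sub_neg_eq_add] at hholder
  rw [fanoMGF_eq_mul_sum hW₀ hq.1 (neg_lt_iff_pos_add'.mp hr.1).ne']
  gcongr

theorem mgf_correct_path_le_gallager_general (hW : ∀ x, W x ∈ stdSimplex ℝ 𝒴)
    (hq : q ∈ stdSimplex ℝ 𝒳) (hr : r ∈ Set.Ioo (-1 : ℝ) 0) (b : ℝ) :
    Real.logb 2 (fanoMGF W q b r) ≤ -r * b - (1 + r) * gallagerE₀ W q (-r / (1 + r)) := by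
  have hs : 1 + r ≠ 0 := (neg_lt_iff_pos_add'.mp hr.1).ne'
  set B := ∑ y, gallagerInner W q (1 + r) y ^ (1 / (1 + r)) with hB
  have hB_pos : 0 < B := sum_gallagerInner_rpow_pos hW hq _ _
  calc Real.logb 2 (fanoMGF W q b r)
      ≤ Real.logb 2 (2 ^ (-r * b) * B ^ (1 + r)) :=
        Real.logb_le_logb_of_le one_lt_two (fanoMGF_pos hW hq b r)
          (fanoMGF_le_mul_rpow hW hq hr b)
    _ = -r * b + (1 + r) * Real.logb 2 B := by
        rw [Real.logb_mul (by positivity) (by positivity),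
          Real.logb_rpow two_pos (OfNat.ofNat_ne_one 2), Real.logb_rpow_eq_mul_logb_of_pos hB_pos]
    _ = -r * b - (1 + r) * gallagerE₀ W q (-r / (1 + r)) := by
        rw [gallagerE₀_neg_div_one_add W q hs, ← hB]
        ring

end Channel

/-- Lemma 1: upper bound on the semi-invariant MGF of the correct-path metric
`γ = log₂(W(Y|X)/P(Y)) - b` in terms of the Gallager function `E₀`:
for `r₀ ∈ (-1,0)`, `log₂ E[2^{r₀ γ}] ≤ -r₀ b - (1+r₀) E₀(-r₀/(1+r₀))`. -/
theorem mgf_correct_path_le_gallager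
    {𝒳 𝒴 : Type*} [Fintype 𝒳] [Fintype 𝒴]
    (W : 𝒳 → 𝒴 → ℝ) (q : 𝒳 → ℝ) (b r₀ : ℝ)
    (hW : ∀ x y, 0 < W x y) (hWrow : ∀ x, ∑ y, W x y = 1)
    (hq : ∀ x, 0 ≤ q x) (hq1 : ∑ x, q x = 1)
    (P : 𝒴 → ℝ) (hP : ∀ y, P y = ∑ x, q x * W x y)
    (hPpos : ∀ y, 0 < P y)
    (E₀ : ℝ → ℝ)
    (hE₀ : ∀ ρ, E₀ ρ =
      -Real.logb 2 (∑ y, (∑ x, q x * W x y ^ (1 / (1 + ρ))) ^ (1 + ρ)))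
    (hr₀ : r₀ ∈ Set.Ioo (-1 : ℝ) 0) :
    Real.logb 2
        (∑ x, ∑ y, q x * W x y *
          (2 : ℝ) ^ (r₀ * (Real.logb 2 (W x y / P y) - b)))
      ≤ -r₀ * b - (1 + r₀) * E₀ (-r₀ / (1 + r₀)) := by
  obtain rfl : P = outputDist W q := funext hP
  obtain rfl : E₀ = gallagerE₀ W q := funext hE₀
  exact mgf_correct_path_le_gallager_general
    (fun x ↦ ⟨fun y ↦ (hW x y).le, hWrow x⟩) ⟨hq, hq1⟩ hr₀ b
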